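/- Let k ≥ 1 be an integer, let f : ℝ → ℝ be k-times continuously differentiable on [a, b] with a < b, and suppose f^{(k)} is monotonically decreasing on [a, b]. Then for every x₀ ∈ (a, b), the function x ↦ R_{k-1}(x; f, x₀)/(x - x₀)^k (extended at x = x₀ by its limit f^{(k)}(x₀)/k!) is monotonically decreasing on [a, b]. -/

import Mathlib

/-! The integral form of Taylor's theorem, after the substitution `t = x₀ + s (x - x₀)`, reads
`R_{k-1}(x; f, x₀) / (x - x₀)^k = ∫₀¹ (1 - s)^(k-1) / (k-1)! * f⁽ᵏ⁾(x₀ + s (x - x₀)) ds`.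
At `x = x₀` the right-hand side is `f⁽ᵏ⁾(x₀) / k!`, so it represents the extended ratio on all of
`[a, b]`. For fixed `s ∈ (0, 1)` the integrand is decreasing in `x`, because
`x ↦ x₀ + s (x - x₀)` is increasing and `f⁽ᵏ⁾` is decreasing; hence so is the integral.

On `(a, b)` the two-sided derivative `iteratedDeriv k f` agrees with the derivative within `[a, b]`,
but at the endpoints it may differ (even be a junk value). The integrals are therefore written with
`iteratedDerivWithin k f (Icc a b)`, which is continuous up to the endpoints; points
`x₀ + s (x - x₀)` with `s ∈ (0, 1)` lie in `(a, b)`, so only interior values are compared. -/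

/-- Degree `k-1` Taylor remainder: `R_{k-1}(x; f, x₀) = f x - ∑_{i=0}^{k-1} f⁽ⁱ⁾(x₀)(x-x₀)^i/i!`. -/
noncomputable def taylorRemainder (f : ℝ → ℝ) (x₀ : ℝ) (k : ℕ) (x : ℝ) : ℝ :=
  f x - ∑ i ∈ Finset.range k, iteratedDeriv i f x₀ * (x - x₀) ^ i / (i.factorial : ℝ)

open Set

/-- In the interior of `[a, b]`, derivatives of order at most `k` may be computed within any set of
unique differentiability containing the point. -/
lemma iteratedDerivWithin_eq_of_mem_Ioo {k i : ℕ} (hik : i ≤ k) {f : ℝ → ℝ} {a b t : ℝ}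
    (hf : ContDiffOn ℝ k f (Icc a b)) (ht : t ∈ Ioo a b) {s : Set ℝ}
    (hs : UniqueDiffOn ℝ s) (hts : t ∈ s) :
    iteratedDerivWithin i f s t = iteratedDeriv i f t :=
  iteratedDerivWithin_eq_iteratedDeriv hs
    ((hf.contDiffAt (Icc_mem_nhds ht.1 ht.2)).of_le (by exact_mod_cast hik)) hts

lemma segment_mem_Ioo {a b x₀ x s : ℝ} (hx₀ : x₀ ∈ Ioo a b) (hx : x ∈ Icc a b)
    (hs : s ∈ Ico (0 : ℝ) 1) : x₀ + s * (x - x₀) ∈ Ioo a b := by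
  obtain ⟨h1, h2⟩ := hx₀
  obtain ⟨h3, h4⟩ := hx
  obtain ⟨h5, h6⟩ := hs
  have h7 : 0 < 1 - s := by linarith
  constructor
  · nlinarith [mul_pos h7 (sub_pos.2 h1), mul_nonneg h5 (sub_nonneg.2 h3)]
  · nlinarith [mul_pos h7 (sub_pos.2 h2), mul_nonneg h5 (sub_nonneg.2 h4)]

/-- Integral representation of the extended ratio, valid also at `x = x₀`. -/
lemma remainder_ratio_eq_integral {n : ℕ} {f : ℝ → ℝ} {a b x₀ x : ℝ}
    (hf : ContDiffOn ℝ (n + 1 : ℕ) f (Icc a b)) (hx₀ : x₀ ∈ Ioo a b) (hx : x ∈ Icc a b) :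
    (if x = x₀ then iteratedDeriv (n + 1) f x₀ / ((n + 1).factorial : ℝ)
      else taylorRemainder f x₀ (n + 1) x / (x - x₀) ^ (n + 1)) =
    ∫ s in (0 : ℝ)..1, (1 - s) ^ n / (n.factorial : ℝ) *
      iteratedDerivWithin (n + 1) f (Icc a b) (x₀ + s * (x - x₀)) := by
  have hab : a < b := hx₀.1.trans hx₀.2
  split_ifs with h
  · subst h
    have hI : ∫ s in (0 : ℝ)..1, (1 - s) ^ n = 1 / ((n : ℝ) + 1) := by
      rw [intervalIntegral.integral_comp_sub_left (fun u : ℝ => u ^ n) 1]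
      simp
    rw [← iteratedDerivWithin_eq_of_mem_Ioo le_rfl hf hx₀ (uniqueDiffOn_Icc hab) hx]
    simp only [sub_self, mul_zero, add_zero, intervalIntegral.integral_mul_const,
      intervalIntegral.integral_div, hI, Nat.factorial_succ]
    push_cast
    field_simp
  · have hne : x - x₀ ≠ 0 := sub_ne_zero.2 h
    have hsub : uIcc x₀ x ⊆ Icc a b := uIcc_subset_Icc (Ioo_subset_Icc_self hx₀) hx
    have hu : UniqueDiffOn ℝ (uIcc x₀ x) := uniqueDiffOn_uIcc (Ne.symm h)
    have hT := taylor_integral_remainder (hf.mono hsub)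
    -- The Taylor polynomial within `[[x₀, x]]` is the one built from two-sided derivatives.
    have hR : f x - taylorWithinEval f n (uIcc x₀ x) x₀ x = taylorRemainder f x₀ (n + 1) x := by
      rw [taylor_within_apply, taylorRemainder]
      congr 1
      refine Finset.sum_congr rfl fun i hi => ?_
      rw [iteratedDerivWithin_eq_of_mem_Ioo (Finset.mem_range.1 hi).le hf hx₀ hu left_mem_uIcc,
        smul_eq_mul]
      ring
    have hC : ∫ t in x₀..x, ((x - t) ^ n / (n.factorial : ℝ)) •
          iteratedDerivWithin (n + 1) f (uIcc x₀ x) t =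
        ∫ t in x₀..x, (x - t) ^ n / (n.factorial : ℝ) *
          iteratedDerivWithin (n + 1) f (Icc a b) t := by
      refine intervalIntegral.integral_congr_uIoo fun t ht => ?_
      have ht' : t ∈ Ioo a b :=
        ⟨(le_min hx₀.1.le hx.1).trans_lt ht.1, ht.2.trans_le (max_le hx₀.2.le hx.2)⟩
      have htu : t ∈ uIcc x₀ x := ⟨ht.1.le, ht.2.le⟩
      simp only [smul_eq_mul]
      rw [iteratedDerivWithin_eq_of_mem_Ioo le_rfl hf ht' hu htu,
        iteratedDerivWithin_eq_of_mem_Ioo le_rfl hf ht' (uniqueDiffOn_Icc hab) (hsub htu)]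
    have hS := intervalIntegral.smul_integral_comp_add_mul (a := 0) (b := 1)
      (fun t => (x - t) ^ n / (n.factorial : ℝ) *
        iteratedDerivWithin (n + 1) f (Icc a b) t) (x - x₀) x₀
    rw [mul_zero, add_zero, mul_one, add_sub_cancel, smul_eq_mul] at hS
    rw [← hR, hT, hC, ← hS, div_eq_iff (pow_ne_zero _ hne), pow_succ',
      mul_left_comm, ← intervalIntegral.integral_mul_const]
    congr 1
    refine intervalIntegral.integral_congr fun s _ => ?_
    have h1 : x - (x₀ + (x - x₀) * s) = (1 - s) * (x - x₀) := by ring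
    rw [h1, mul_pow, mul_comm (x - x₀) s]
    ring

/-- if `f` is `C^k` on `[a,b]` and `f⁽ᵏ⁾` is monotonically decreasing on `[a,b]`,
then for `x₀ ∈ (a,b)`, the ratio `x ↦ R_{k-1}(x; f, x₀)/(x-x₀)^k` (extended at `x₀` by
`f⁽ᵏ⁾(x₀)/k!`) is monotonically decreasing on `[a,b]`. -/
theorem remainder_ratio_antitone (k : ℕ) (hk : 1 ≤ k) (f : ℝ → ℝ) (a b : ℝ) (hab : a < b)
    (hf : ContDiffOn ℝ (k : ℕ∞) f (Set.Icc a b))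
    (hmono : AntitoneOn (iteratedDeriv k f) (Set.Icc a b)) :
    ∀ x₀ ∈ Set.Ioo a b,
      AntitoneOn
        (fun x => if x = x₀ then iteratedDeriv k f x₀ / (k.factorial : ℝ)
          else taylorRemainder f x₀ k x / (x - x₀) ^ k)
        (Set.Icc a b) := by
  intro x₀ hx₀ x hx y hy hxy
  obtain ⟨n, rfl⟩ : ∃ n, k = n + 1 := ⟨k - 1, by omega⟩
  have hf' : ContDiffOn ℝ (n + 1 : ℕ) f (Icc a b) := by exact_mod_cast hf
  have hint : ∀ z ∈ Icc a b, IntervalIntegrable (fun s : ℝ => (1 - s) ^ n / (n.factorial : ℝ) *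
      iteratedDerivWithin (n + 1) f (Icc a b) (x₀ + s * (z - x₀))) MeasureTheory.volume 0 1 := by
    intro z hz
    apply ContinuousOn.intervalIntegrable_of_Icc zero_le_one
    refine ContinuousOn.mul (by fun_prop) ?_
    refine (hf'.continuousOn_iteratedDerivWithin le_rfl (uniqueDiffOn_Icc hab)).comp
      (by fun_prop) fun s hs => ?_
    rcases hs.2.eq_or_lt with rfl | h1
    · simpa using hz
    · exact Ioo_subset_Icc_self (segment_mem_Ioo hx₀ hz ⟨hs.1, h1⟩)
  simp only [remainder_ratio_eq_integral hf' hx₀ hx, remainder_ratio_eq_integral hf' hx₀ hy]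
  refine intervalIntegral.integral_mono_on_of_le_Ioo zero_le_one (hint y hy) (hint x hx)
    fun s hs => ?_
  have hx' := segment_mem_Ioo hx₀ hx ⟨hs.1.le, hs.2⟩
  have hy' := segment_mem_Ioo hx₀ hy ⟨hs.1.le, hs.2⟩
  rw [iteratedDerivWithin_eq_of_mem_Ioo le_rfl hf' hx' (uniqueDiffOn_Icc hab)
      (Ioo_subset_Icc_self hx'),
    iteratedDerivWithin_eq_of_mem_Ioo le_rfl hf' hy' (uniqueDiffOn_Icc hab)
      (Ioo_subset_Icc_self hy')]
  have hs1 : 0 ≤ 1 - s := by linarith [hs.2]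
  refine mul_le_mul_of_nonneg_left
    (hmono (Ioo_subset_Icc_self hx') (Ioo_subset_Icc_self hy') ?_) (by positivity)
  linarith [mul_le_mul_of_nonneg_left hxy hs.1.le]
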